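/- Let x be a real number with 1/4 < x < 1 and let α > 0 satisfy x^α + (1/2)^α + (1/(4x))^α = 1. Then α ≥ log 3 / log 2, with equality if and only if x = 1/2. -/

import Mathlib

/-!
Put `a = x^α`, `b = (1/2)^α`, `c = (1/(4x))^α`. Since `x * (1/(4x)) = (1/2)^2`, the outer terms
satisfy `a * c = b^2`, so by AM-GM `a + c ≥ 2b`, and the Moran equation `a + b + c = 1` gives
`b ≤ 1/3`, i.e. `α ≥ log 3 / log 2`. Equality forces equality in AM-GM, hence `a = b`, and
`x = 1/2` by injectivity of `t ↦ t^α`.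
-/

/-- If `1/4 < x < 1` and `α > 0` satisfies the Moran equation
`x^α + (1/2)^α + (1/(4x))^α = 1`, then `α ≥ log 3 / log 2`, with equality if
and only if `x = 1/2`. -/
theorem simdim_min_log3_log2 (x α : ℝ)
    (hx1 : 1 / 4 < x) (hx2 : x < 1) (hα : 0 < α)
    (hmoran : x ^ α + (1 / 2 : ℝ) ^ α + (1 / (4 * x)) ^ α = 1) :
    Real.log 3 / Real.log 2 ≤ α ∧
      (α = Real.log 3 / Real.log 2 ↔ x = 1 / 2) := by
  have hx : 0 < x := by linarith
  have hl2 : 0 < Real.log 2 := Real.log_pos (by norm_num)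
  have hb : 0 < (1 / 2 : ℝ) ^ α := by positivity
  have hlogb : Real.log ((1 / 2 : ℝ) ^ α) = -(α * Real.log 2) := by
    rw [Real.log_rpow (by norm_num), one_div, Real.log_inv]; ring
  have hlog3 : Real.log (1 / 3 : ℝ) = -Real.log 3 := by rw [one_div, Real.log_inv]
  have hac : x ^ α * (1 / (4 * x)) ^ α = (1 / 2 : ℝ) ^ α * (1 / 2 : ℝ) ^ α := by
    rw [← Real.mul_rpow hx.le (by positivity), ← Real.mul_rpow (by norm_num) (by norm_num)]
    congr 1
    field_simp
    norm_num
  have hbα : α = Real.log 3 / Real.log 2 ↔ (1 / 2 : ℝ) ^ α = 1 / 3 := by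
    rw [eq_div_iff hl2.ne', ← Real.log_injOn_pos.eq_iff (Set.mem_Ioi.2 hb)
      (Set.mem_Ioi.2 (by norm_num)), hlogb, hlog3, neg_inj]
  have hab : x ^ α = (1 / 2 : ℝ) ^ α ↔ x = 1 / 2 :=
    Real.rpow_left_inj hx.le (by norm_num) hα.ne'
  have ha : 0 < x ^ α := by positivity
  have hc : 0 < (1 / (4 * x)) ^ α := by positivity
  have hb3 : (1 / 2 : ℝ) ^ α ≤ 1 / 3 := by
    have h2 : 2 * (1 / 2 : ℝ) ^ α ≤ x ^ α + (1 / (4 * x)) ^ α := by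
      refine (sq_le_sq₀ (by positivity) (by positivity)).1 ?_
      nlinarith [sq_nonneg (x ^ α - (1 / (4 * x)) ^ α)]
    linarith
  refine ⟨?_, ?_⟩
  · have h := Real.log_le_log hb hb3
    rw [hlogb, hlog3] at h
    rw [div_le_iff₀ hl2]
    linarith
  · rw [hbα, ← hab]
    constructor
    · intro h
      rw [h] at hmoran hac ⊢
      have hc' : (1 / (4 * x)) ^ α = 2 / 3 - x ^ α := by linarith
      rw [hc'] at hac
      have : (x ^ α - 1 / 3) ^ 2 = 0 := by linear_combination -hac
      linarith [pow_eq_zero_iff (two_ne_zero) |>.1 this]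
    · intro h
      rw [h] at hmoran hac
      have := mul_left_cancel₀ hb.ne' hac
      linarith
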